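/- arXiv:1805.10348 — 5 statements merged into one kernel-verified Lean document; each statement's English description precedes it below -/
import Mathlib

section
/- Let d, R be positive integers, λ : Fin R → ℝ, and let U ∈ ℝ^{d×R} satisfy Uᵀ U = I_R. Define the symmetric tensor T(a,b,c) = Σ_{m=1}^{R} λ_m U_{a m} U_{b m} U_{c m}. Let v ∈ ℝ^d be the vector of slice traces, v_k = Σ_{l=1}^{d} T(l,l,k), and let N be the d×d matrix N_{i j} = Σ_{k=1}^{d} T(i,j,k) v_k. Then N = U · Diag(λ_1², …, λ_R²) · Uᵀ; i.e., N_{i j} = Σ_{m=1}^{R} λ_m² U_{i m} U_{j m} for all i, j. -/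
open Matrix BigOperators

/-!
Contracting the third mode of a CP tensor with a vector `x` rescales the `t`-th weight by the inner
product of `x` with the `t`-th column of the third factor. When the columns are orthonormal, the
vector of slice traces is their combination with the weights as coefficients, so for this `x` the
inner product is again the `t`-th weight, which is thereby squared.
-/

variable {K l m n ι : Type*}

/-- The contraction of a third-order tensor with a vector along its third mode; the two remaining
modes index the rows and columns of the resulting matrix. -/
def thirdModeContraction [Mul K] [AddCommMonoid K] [Fintype n] (T : l → m → n → K)
    (x : n → K) : Matrix l m K :=
  of fun a b => T a b ⬝ᵥ x

/-- The vector of traces of the third-mode slices `T(·, ·, c)` of a third-order tensor. -/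
def sliceTrace [AddCommMonoid K] [Fintype m] (T : m → m → n → K) (c : n) : K :=
  trace (of fun a b => T a b c)

variable [CommSemiring K] [Fintype ι]

/-- The third-order CP (canonical polyadic) tensor with weights `w` whose rank-one terms are the
outer products of corresponding columns of `A`, `B` and `C`. Taking `A = B = C` gives the symmetric
CP tensors. -/
def cpTensor (w : ι → K) (A : Matrix l ι K) (B : Matrix m ι K) (C : Matrix n ι K)
    (a : l) (b : m) (c : n) : K :=
  ∑ t, w t * A a t * B b t * C c t

theorem mul_diagonal_mul_transpose_apply [DecidableEq ι] (w : ι → K) (A : Matrix l ι K)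
    (B : Matrix m ι K) (a : l) (b : m) :
    (A * diagonal w * Bᵀ) a b = ∑ t, w t * A a t * B b t := by
  simp only [mul_apply (M := A * diagonal w), mul_diagonal, transpose_apply, mul_comm (w _)]

theorem thirdModeContraction_cpTensor [Fintype n] [DecidableEq ι] (w : ι → K) (A : Matrix l ι K)
    (B : Matrix m ι K) (C : Matrix n ι K) (x : n → K) :
    thirdModeContraction (cpTensor w A B C) x = A * diagonal (w * (Cᵀ *ᵥ x)) * Bᵀ := by
  ext a b
  rw [mul_diagonal_mul_transpose_apply]
  calc ∑ c, (∑ t, w t * A a t * B b t * C c t) * x c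
      = ∑ t, ∑ c, w t * A a t * B b t * C c t * x c := by
        simp only [Finset.sum_mul]
        exact Finset.sum_comm
    _ = ∑ t, (w t * ∑ c, C c t * x c) * A a t * B b t := by
        simp only [Finset.mul_sum, Finset.sum_mul]
        congr! 2
        ring

theorem sliceTrace_cpTensor [Fintype m] (w : ι → K) (A B : Matrix m ι K) (C : Matrix n ι K) :
    sliceTrace (cpTensor w A B C) = C *ᵥ (w * (Aᵀ * B).diag) := by
  ext c
  calc ∑ a, ∑ t, w t * A a t * B a t * C c t
      = ∑ t, ∑ a, w t * A a t * B a t * C c t := Finset.sum_comm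
    _ = ∑ t, C c t * (w t * ∑ a, A a t * B a t) := by
        simp only [Finset.mul_sum]
        congr! 2
        ring

theorem symmetric_trace_contraction_general [Fintype m] [Fintype n] [DecidableEq ι] (w : ι → K)
    {A B : Matrix m ι K} {C : Matrix n ι K} (hAB : (Aᵀ * B).diag = 1) (hC : Cᵀ * C = 1) :
    thirdModeContraction (cpTensor w A B C) (sliceTrace (cpTensor w A B C)) =
      A * diagonal (w ^ 2) * Bᵀ := by
  have trace_eq : sliceTrace (cpTensor w A B C) = C *ᵥ w := by
    rw [sliceTrace_cpTensor, hAB, mul_one]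
  have coeff_eq : Cᵀ *ᵥ (C *ᵥ w) = w := by
    rw [mulVec_mulVec, hC, one_mulVec]
  rw [thirdModeContraction_cpTensor, trace_eq, coeff_eq, sq]

/-- Slice-based initialization for a symmetric orthogonal CP tensor:
contracting the tensor with the vector of slice traces yields `U Diag(λ²) Uᵀ`. -/
theorem symmetric_trace_contraction
    {d R : ℕ} (hd : 0 < d) (hR : 0 < R) (lam : Fin R → ℝ)
    (U : Matrix (Fin d) (Fin R) ℝ) (hU : Uᵀ * U = 1)
    (T : Fin d → Fin d → Fin d → ℝ)
    (hT : ∀ a b c, T a b c = ∑ m, lam m * U a m * U b m * U c m)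
    (v : Fin d → ℝ) (hv : ∀ k, v k = ∑ l, T l l k)
    (N : Matrix (Fin d) (Fin d) ℝ)
    (hN : ∀ i j, N i j = ∑ k, T i j k * v k) :
    ∀ i j, N i j = ∑ m, lam m ^ 2 * U i m * U j m := by
  obtain ⟨rfl, rfl, rfl⟩ : T = cpTensor lam U U U ∧ v = sliceTrace T ∧
      N = thirdModeContraction T v := ⟨funext₃ hT, funext hv, Matrix.ext hN⟩
  simp [symmetric_trace_contraction_general, hU, mul_diagonal_mul_transpose_apply]
end

section
/- Let q ≥ 0 and let t_A, t_B, t_C : ℕ → ℝ be sequences of nonnegative reals satisfying, for every k ≥ 0: t_A(k+1) ≤ q · t_B(k) · t_C(k), t_B(k+1) ≤ q · t_A(k) · t_C(k), and t_C(k+1) ≤ q · t_A(k) · t_B(k). Then for every K ≥ 1, t_A(K) ≤ q^{2^K − 1} · t_A(0)^{a_K} · (t_B(0) · t_C(0))^{b_K}, where a_K = (2^K + 2·(−1)^K)/3 and b_K = (2^K − (−1)^K)/3 (these are natural numbers for every K ≥ 1). -/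
open BigOperators

/-!
Iterating a monomial recursion `t i (k + 1) ≤ q * ∏ j, t j k ^ M i j` multiplies exponent
matrices, so the `K`-th term is bounded by a monomial in the initial values whose exponents are
the entries of `M ^ K`. For `t i (k + 1) ≤ q * ∏ j ≠ i, t j k` with `n` sequences, `M` is the
adjacency matrix `J - 1` of the complete graph on `n` vertices, with eigenvalues `n - 1` and `-1`;
hence `n M ^ K = (n - 1) ^ K J + (-1) ^ K (n - J)`, where `J` is the all-ones matrix.
-/

open Finset

section MonomialRecursion

theorem prod_pow_matrix_mul_apply {l m n α : Type*} [Fintype m] [Fintype n] [CommMonoid α]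
    (M : Matrix l m ℕ) (N : Matrix m n ℕ) (x : n → α) (i : l) :
    ∏ k, x k ^ (M * N) i k = ∏ j, (∏ k, x k ^ N j k) ^ M i j := by
  simp only [Matrix.mul_apply, ← prod_pow_eq_pow_sum, mul_comm (M i _), pow_mul, ← prod_pow]
  exact prod_comm

theorem le_pow_geom_sum_mul_prod_pow_matrix_pow {ι R : Type*} [Fintype ι] [DecidableEq ι]
    [CommSemiring R] [PartialOrder R] [IsOrderedRing R] {M : Matrix ι ι ℕ} {d : ℕ}
    (hM : ∀ i, ∑ j, M i j = d) {q : R} (hq : 0 ≤ q) {t : ι → ℕ → R} (ht : ∀ i k, 0 ≤ t i k)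
    (hrec : ∀ i k, t i (k + 1) ≤ q * ∏ j, t j k ^ M i j) (K : ℕ) (i : ι) :
    t i K ≤ q ^ (∑ k ∈ range K, d ^ k) * ∏ j, t j 0 ^ (M ^ K) i j := by
  induction K generalizing i with
  | zero => simp [Matrix.one_apply]
  | succ K ih =>
    let g := ∑ k ∈ range K, d ^ k
    calc t i (K + 1) ≤ q * ∏ l, t l K ^ M i l := hrec i K
      _ ≤ q * ∏ l, (q ^ g * ∏ j, t j 0 ^ (M ^ K) l j) ^ M i l := by
        gcongr with l
        · exact fun l _ ↦ pow_nonneg (ht l K) _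
        · exact ht l K
        · exact ih l
      _ = q ^ (d * g + 1) * ∏ j, t j 0 ^ (M ^ (K + 1)) i j := by
        rw [pow_succ' M, prod_pow_matrix_mul_apply]
        simp only [mul_pow, prod_mul_distrib, prod_pow_eq_pow_sum, hM]
        ring
      _ = q ^ (∑ k ∈ range (K + 1), d ^ k) * ∏ j, t j 0 ^ (M ^ (K + 1)) i j := by
        rw [geom_sum_succ]

end MonomialRecursion

section AdjMatrix

open Matrix SimpleGraph

theorem sum_adjMatrix_apply {V : Type*} [Fintype V] (G : SimpleGraph V) [DecidableRel G.Adj]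
    (v : V) : ∑ w, G.adjMatrix ℕ v w = G.degree v := by
  simp [adjMatrix_apply, ← card_neighborFinset_eq_degree, neighborFinset_eq_filter]

theorem prod_pow_adjMatrix_apply {V α : Type*} [Fintype V] [CommMonoid α] (G : SimpleGraph V)
    [DecidableRel G.Adj] (x : V → α) (v : V) :
    ∏ w, x w ^ G.adjMatrix ℕ v w = ∏ w ∈ G.neighborFinset v, x w := by
  simp [adjMatrix_apply, neighborFinset_eq_filter, prod_filter, pow_ite]

theorem of_one_mul_of_one {l m n α : Type*} [Fintype m] [NonAssocSemiring α] :
    (of 1 : Matrix l m α) * (of 1 : Matrix m n α) = (Fintype.card m : α) • of 1 := by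
  ext
  simp [mul_apply]

variable {V : Type*} [Fintype V] [DecidableEq V]

theorem card_smul_adjMatrix_top_pow {α : Type*} [CommRing α] (K : ℕ) :
    (Fintype.card V : α) • (⊤ : SimpleGraph V).adjMatrix α ^ K =
      ((Fintype.card V : α) - 1) ^ K • of 1 +
        (-1 : α) ^ K • ((Fintype.card V : α) • 1 - of 1) := by
  induction K with
  | zero => simp
  | succ K ih =>
    rw [pow_succ, ← smul_mul_assoc, ih, adjMatrix_completeGraph_eq_of_one_sub_one]
    simp only [mul_sub, add_mul, sub_mul, smul_mul_assoc, of_one_mul_of_one, one_mul, mul_one]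
    module

theorem card_mul_adjMatrix_top_pow_apply (K : ℕ) (v w : V) :
    (Fintype.card V : ℤ) * (((⊤ : SimpleGraph V).adjMatrix ℕ ^ K) v w : ℕ) =
      ((Fintype.card V : ℤ) - 1) ^ K +
        (-1) ^ K * ((if v = w then (Fintype.card V : ℤ) else 0) - 1) := by
  have cast_apply : ((((⊤ : SimpleGraph V).adjMatrix ℕ ^ K) v w : ℕ) : ℤ) =
      ((⊤ : SimpleGraph V).adjMatrix ℤ ^ K) v w := by
    simp only [adjMatrix_pow_apply_eq_card_walk, Nat.cast_id]
  rw [cast_apply, ← smul_eq_mul, ← Matrix.smul_apply, card_smul_adjMatrix_top_pow]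
  simp only [Matrix.add_apply, Matrix.sub_apply, Matrix.smul_apply, one_apply, of_apply,
    Pi.one_apply, smul_eq_mul, mul_ite, mul_one, mul_zero]

end AdjMatrix

theorem tangent_recursion_bound_general {ι R : Type*} [Fintype ι] [DecidableEq ι]
    [CommSemiring R] [PartialOrder R] [IsOrderedRing R] {q : R} (hq : 0 ≤ q)
    {t : ι → ℕ → R} (ht : ∀ i k, 0 ≤ t i k)
    (hrec : ∀ i k, t i (k + 1) ≤ q * ∏ j ∈ {i}ᶜ, t j k) (K : ℕ) {a b : ℕ}
    (ha : Fintype.card ι * (a : ℤ) =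
      (Fintype.card ι - 1) ^ K + (Fintype.card ι - 1) * (-1) ^ K)
    (hb : Fintype.card ι * (b : ℤ) = (Fintype.card ι - 1) ^ K - (-1) ^ K) (i : ι) :
    t i K ≤
      q ^ (∑ k ∈ range K, (Fintype.card ι - 1) ^ k) * t i 0 ^ a * (∏ j ∈ {i}ᶜ, t j 0) ^ b := by
  let A := (⊤ : SimpleGraph ι).adjMatrix ℕ
  have row_sum (i : ι) : ∑ j, A i j = Fintype.card ι - 1 := by
    rw [sum_adjMatrix_apply, SimpleGraph.complete_graph_degree]
  have row_prod (i : ι) (k : ℕ) : ∏ j, t j k ^ A i j = ∏ j ∈ {i}ᶜ, t j k := by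
    rw [prod_pow_adjMatrix_apply, SimpleGraph.neighborFinset_top]
  have card_ne_zero : (Fintype.card ι : ℤ) ≠ 0 := mod_cast (Fintype.card_pos_iff.2 ⟨i⟩).ne'
  have pow_diag : (A ^ K) i i = a := by
    have h := card_mul_adjMatrix_top_pow_apply K i i
    rw [if_pos rfl, mul_comm ((-1) ^ K), ← ha] at h
    exact_mod_cast mul_left_cancel₀ card_ne_zero h
  have pow_offDiag {j : ι} (hj : j ∈ ({i}ᶜ : Finset ι)) : (A ^ K) i j = b := by
    have h := card_mul_adjMatrix_top_pow_apply K i j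
    rw [if_neg (by simpa [eq_comm] using hj), zero_sub, mul_neg_one, ← sub_eq_add_neg, ← hb] at h
    exact_mod_cast mul_left_cancel₀ card_ne_zero h
  calc t i K ≤ q ^ (∑ k ∈ range K, (Fintype.card ι - 1) ^ k) * ∏ j, t j 0 ^ (A ^ K) i j :=
        le_pow_geom_sum_mul_prod_pow_matrix_pow row_sum hq ht (by simpa only [row_prod]) K i
    _ = _ := by
        rw [Fintype.prod_eq_mul_prod_compl i, pow_diag, ← prod_pow, mul_assoc,
          prod_congr rfl fun j hj ↦ by rw [pow_offDiag hj]]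

/-- Abstract tangent recursion of alternating subspace iteration: nonnegative sequences
satisfying `t_A(k+1) ≤ q t_B(k) t_C(k)` (and cyclic variants) obey the closed-form
doubly-exponential bound with exponents `a_K = (2^K + 2(−1)^K)/3`, `b_K = (2^K − (−1)^K)/3`. -/
theorem tangent_recursion_bound
    (q : ℝ) (hq : 0 ≤ q) (tA tB tC : ℕ → ℝ)
    (hA : ∀ k, 0 ≤ tA k) (hB : ∀ k, 0 ≤ tB k) (hC : ∀ k, 0 ≤ tC k)
    (hrecA : ∀ k, tA (k + 1) ≤ q * tB k * tC k)
    (hrecB : ∀ k, tB (k + 1) ≤ q * tA k * tC k)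
    (hrecC : ∀ k, tC (k + 1) ≤ q * tA k * tB k) :
    ∀ K, 1 ≤ K → ∀ aK bK : ℕ,
      3 * (aK : ℤ) = 2 ^ K + 2 * (-1) ^ K →
      3 * (bK : ℤ) = 2 ^ K - (-1) ^ K →
      tA K ≤ q ^ (2 ^ K - 1) * tA 0 ^ aK * (tB 0 * tC 0) ^ bK := by
  intro K _ aK bK haK hbK
  have compl_zero : ({0}ᶜ : Finset (Fin 3)) = {1, 2} := rfl
  have compl_one : ({1}ᶜ : Finset (Fin 3)) = {0, 2} := rfl
  have compl_two : ({2}ᶜ : Finset (Fin 3)) = {0, 1} := rfl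
  have bound := tangent_recursion_bound_general (t := ![tA, tB, tC]) hq
    (by simpa [Fin.forall_fin_succ] using ⟨hA, hB, hC⟩)
    (by simpa [Fin.forall_fin_succ, compl_zero, compl_one, compl_two, ← mul_assoc] using
      ⟨hrecA, hrecB, hrecC⟩)
    K (by simpa using haK) (by simpa using hbK) 0
  simpa [compl_zero, Nat.geomSum_eq] using bound
end

section
/- Let d ≥ r ≥ 1, let Φ : Fin d × Fin d × Fin d → ℝ and φ ≥ 0 satisfy |Σ_{k,z,u} Φ(k,z,u) x_k y_z w_u| ≤ φ·‖x‖·‖y‖·‖w‖ for all x, y, w ∈ ℝ^d. Let A ∈ ℝ^{d×r} have orthonormal columns (Aᵀ A = I_r), and let Q_B, Q_C ∈ ℝ^{d×r} have columns of Euclidean norm at most 1. Define M ∈ ℝ^{r×r} by M_{i j} = Σ_{k,z,u} Φ(k,z,u) · A_{k i} · (Q_B)_{z j} · (Q_C)_{u j}. Then for all x, y ∈ ℝ^r, |xᵀ M y| ≤ √r · φ · ‖x‖ · ‖y‖. -/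
/-!
Write `N = Φ₍₁₎ (Q_C ⊙ Q_B)`, so that `M = Aᵀ N`. The `j`-th coordinate of `xᵀ N` is the trilinear
form of `Φ` at `x` and the `j`-th columns of `Q_B` and `Q_C`, hence at most `φ ‖x‖` in absolute
value. A vector with `r` coordinates bounded by `c` has Euclidean norm at most `√r c`, so
Cauchy–Schwarz bounds `xᵀ N y` by `√r φ ‖x‖ ‖y‖`. Replacing `x` by `A x` costs nothing, since `A` is
an isometry.
-/

open Matrix BigOperators

/-- Euclidean norm of a finite real vector. -/
noncomputable def eunorm {n : ℕ} (x : Fin n → ℝ) : ℝ := Real.sqrt (∑ i, x i ^ 2)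

section Eunorm

variable {m n : ℕ}

theorem eunorm_nonneg (x : Fin n → ℝ) : 0 ≤ eunorm x := Real.sqrt_nonneg _

theorem eunorm_eq_norm_toLp (x : Fin n → ℝ) : eunorm x = ‖WithLp.toLp 2 x‖ := by
  simp [eunorm, EuclideanSpace.norm_eq]

theorem eunorm_eq_sqrt_dotProduct (x : Fin n → ℝ) : eunorm x = √(x ⬝ᵥ x) := by
  simp only [eunorm, dotProduct, sq]

theorem abs_dotProduct_le_eunorm_mul_eunorm (x y : Fin n → ℝ) :
    |x ⬝ᵥ y| ≤ eunorm x * eunorm y := by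
  simpa [eunorm_eq_norm_toLp, EuclideanSpace.inner_toLp_toLp, dotProduct_comm] using
    abs_real_inner_le_norm (WithLp.toLp 2 x) (WithLp.toLp 2 y)

theorem eunorm_le_sqrt_mul_of_forall_abs_le {x : Fin n → ℝ} {c : ℝ} (hc : 0 ≤ c)
    (hx : ∀ i, |x i| ≤ c) : eunorm x ≤ √n * c := by
  have sum_sq_le : ∑ i, x i ^ 2 ≤ n * c ^ 2 := by
    simpa using Finset.sum_le_card_nsmul Finset.univ (fun i => x i ^ 2) (c ^ 2)
      fun i _ => sq_le_sq' (neg_le_of_abs_le (hx i)) (le_of_abs_le (hx i))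
  calc eunorm x ≤ √(n * c ^ 2) := Real.sqrt_le_sqrt sum_sq_le
    _ = √n * c := by rw [Real.sqrt_mul n.cast_nonneg, Real.sqrt_sq hc]

theorem eunorm_mulVec_of_transpose_mul_self_eq_one {A : Matrix (Fin m) (Fin n) ℝ}
    (hA : Aᵀ * A = 1) (x : Fin n → ℝ) : eunorm (A *ᵥ x) = eunorm x := by
  rw [eunorm_eq_sqrt_dotProduct, eunorm_eq_sqrt_dotProduct, dotProduct_mulVec,
    ← mulVec_transpose, mulVec_mulVec, hA, one_mulVec]

end Eunorm

section ModeOneKhatriRao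

variable {ι κ μ ν R : Type*} [Fintype κ] [Fintype μ] [CommSemiring R]

/-- The matrix `Φ₍₁₎ (C ⊙ B)`: the first-mode matricization of the third-order tensor `Φ` times the
Khatri–Rao product of `C` and `B`, written out entrywise so that no indexing of the columns of
`Φ₍₁₎` has to be chosen. -/
def modeOneKhatriRao (Φ : ι → κ → μ → R) (B : Matrix κ ν R) (C : Matrix μ ν R) : Matrix ι ν R :=
  of fun k j => ∑ z, ∑ u, Φ k z u * B z j * C u j

theorem vecMul_modeOneKhatriRao_apply [Fintype ι] (Φ : ι → κ → μ → R) (B : Matrix κ ν R)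
    (C : Matrix μ ν R) (x : ι → R) (j : ν) :
    (x ᵥ* modeOneKhatriRao Φ B C) j =
      ∑ k, ∑ z, ∑ u, Φ k z u * x k * B.col j z * C.col j u := by
  simp only [vecMul, dotProduct, modeOneKhatriRao, of_apply, col_apply, Finset.mul_sum,
    mul_left_comm (x _), mul_assoc]

end ModeOneKhatriRao

section TensorOpNorm

variable {d₁ d₂ d₃ m n : ℕ} {Φ : Fin d₁ → Fin d₂ → Fin d₃ → ℝ} {φ : ℝ}
  {B : Matrix (Fin d₂) (Fin n) ℝ} {C : Matrix (Fin d₃) (Fin n) ℝ}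

/-- The third-order tensor `Φ` has operator norm at most `φ` with respect to Euclidean norms. It is
a predicate on the bound, so that the norm itself need not be constructed. -/
def TensorOpNormLE (Φ : Fin d₁ → Fin d₂ → Fin d₃ → ℝ) (φ : ℝ) : Prop :=
  ∀ x y w, |∑ k, ∑ z, ∑ u, Φ k z u * x k * y z * w u| ≤ φ * eunorm x * eunorm y * eunorm w

theorem abs_vecMul_modeOneKhatriRao_apply_le (hφ : 0 ≤ φ) (hΦ : TensorOpNormLE Φ φ) {j : Fin n}
    (hB : eunorm (B.col j) ≤ 1) (hC : eunorm (C.col j) ≤ 1) (x : Fin d₁ → ℝ) :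
    |(x ᵥ* modeOneKhatriRao Φ B C) j| ≤ φ * eunorm x := by
  rw [vecMul_modeOneKhatriRao_apply]
  calc |∑ k, ∑ z, ∑ u, Φ k z u * x k * B.col j z * C.col j u|
      ≤ φ * eunorm x * eunorm (B.col j) * eunorm (C.col j) := hΦ x (B.col j) (C.col j)
    _ = φ * eunorm x * (eunorm (B.col j) * eunorm (C.col j)) := mul_assoc _ _ _
    _ ≤ φ * eunorm x := mul_le_of_le_one_right (mul_nonneg hφ (eunorm_nonneg x))
        (mul_le_one₀ hB (eunorm_nonneg _) hC)

theorem abs_dotProduct_modeOneKhatriRao_mulVec_le (hφ : 0 ≤ φ) (hΦ : TensorOpNormLE Φ φ)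
    (hB : ∀ j, eunorm (B.col j) ≤ 1) (hC : ∀ j, eunorm (C.col j) ≤ 1)
    (x : Fin d₁ → ℝ) (y : Fin n → ℝ) :
    |x ⬝ᵥ modeOneKhatriRao Φ B C *ᵥ y| ≤ √n * φ * eunorm x * eunorm y := by
  have eunorm_vecMul_le : eunorm (x ᵥ* modeOneKhatriRao Φ B C) ≤ √n * (φ * eunorm x) :=
    eunorm_le_sqrt_mul_of_forall_abs_le (mul_nonneg hφ (eunorm_nonneg x))
      fun j => abs_vecMul_modeOneKhatriRao_apply_le hφ hΦ (hB j) (hC j) x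
  calc |x ⬝ᵥ modeOneKhatriRao Φ B C *ᵥ y|
      = |x ᵥ* modeOneKhatriRao Φ B C ⬝ᵥ y| := by rw [dotProduct_mulVec]
    _ ≤ eunorm (x ᵥ* modeOneKhatriRao Φ B C) * eunorm y :=
        abs_dotProduct_le_eunorm_mul_eunorm _ _
    _ ≤ √n * (φ * eunorm x) * eunorm y :=
        mul_le_mul_of_nonneg_right eunorm_vecMul_le (eunorm_nonneg y)
    _ = √n * φ * eunorm x * eunorm y := by rw [mul_assoc (√n) φ]

theorem compressed_noise_bound_general (hφ : 0 ≤ φ) (hΦ : TensorOpNormLE Φ φ)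
    {A : Matrix (Fin d₁) (Fin m) ℝ} (hA : ∀ x, eunorm (A *ᵥ x) ≤ eunorm x)
    (hB : ∀ j, eunorm (B.col j) ≤ 1) (hC : ∀ j, eunorm (C.col j) ≤ 1)
    (x : Fin m → ℝ) (y : Fin n → ℝ) :
    |x ⬝ᵥ (Aᵀ * modeOneKhatriRao Φ B C) *ᵥ y| ≤ √n * φ * eunorm x * eunorm y := by
  calc |x ⬝ᵥ (Aᵀ * modeOneKhatriRao Φ B C) *ᵥ y|
      = |(A *ᵥ x) ⬝ᵥ modeOneKhatriRao Φ B C *ᵥ y| := by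
        rw [← mulVec_mulVec, dotProduct_mulVec, vecMul_transpose]
    _ ≤ √n * φ * eunorm (A *ᵥ x) * eunorm y :=
        abs_dotProduct_modeOneKhatriRao_mulVec_le hφ hΦ hB hC _ y
    _ ≤ √n * φ * eunorm x * eunorm y := by
        gcongr
        · exact eunorm_nonneg y
        · exact hA x

end TensorOpNorm

/-- Perturbation in the convergence step: the compressed noise matrix
`M = Aᵀ Φ₍₁₎ (Q_C ⊙ Q_B)` satisfies `|xᵀ M y| ≤ √r · φ · ‖x‖ · ‖y‖`. -/
theorem compressed_noise_bound
    {d r : ℕ} (hr : 1 ≤ r) (hrd : r ≤ d)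
    (Φ : Fin d → Fin d → Fin d → ℝ) (φ : ℝ) (hφ : 0 ≤ φ)
    (hop : ∀ x y w : Fin d → ℝ,
      |∑ k, ∑ z, ∑ u, Φ k z u * x k * y z * w u| ≤ φ * eunorm x * eunorm y * eunorm w)
    (A QB QC : Matrix (Fin d) (Fin r) ℝ) (hA : Aᵀ * A = 1)
    (hQB : ∀ j, eunorm (fun z => QB z j) ≤ 1)
    (hQC : ∀ j, eunorm (fun z => QC z j) ≤ 1)
    (M : Matrix (Fin r) (Fin r) ℝ)
    (hM : ∀ i j, M i j = ∑ k, ∑ z, ∑ u, Φ k z u * A k i * QB z j * QC u j) :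
    ∀ x y : Fin r → ℝ,
      |∑ i, ∑ j, x i * M i j * y j| ≤ Real.sqrt r * φ * eunorm x * eunorm y := by
  intro x y
  have M_eq : M = Aᵀ * modeOneKhatriRao Φ QB QC := by
    ext i j
    exact (hM i j).trans (vecMul_modeOneKhatriRao_apply Φ QB QC (A.col i) j).symm
  rw [← toBilin'_apply, toBilin'_apply', M_eq]
  exact compressed_noise_bound_general hφ hop
    (fun x => (eunorm_mulVec_of_transpose_mul_self_eq_one hA x).le) hQB hQC x y
end

section
/- Let d_r > d_{r+1} ≥ 0 be real numbers with gap := d_r − d_{r+1}, let φ ≥ 0, let θ ∈ [0, π/2), and set u := φ / (gap · cos θ). If 2u ≤ 1, then d_r · cos θ − φ > 0 and (d_{r+1} · sin θ + φ) / (d_r · cos θ − φ) ≤ max( (d_{r+1}/d_r)^{1−2u} · tan θ, 1 ), where (d_{r+1}/d_r)^{1−2u} denotes the real power of the nonnegative real d_{r+1}/d_r with exponent 1−2u. -/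
open Real

/-!
Dividing by `d_r cos θ`, with `q = d_{r+1} / d_r` and `t = tan θ`, turns the numerator and the
denominator into `q t + a` and `1 - b`, where the perturbations satisfy `a + b = v (1 - q)` with
`v = 2u`. Split `q = q ^ v * q ^ (1 - v)`. Bernoulli's inequality `q ^ v ≤ 1 - v (1 - q)` then
gives `q t ≤ (1 - (a + b)) M` for every nonnegative `M ≥ q ^ (1 - v) t`. If moreover `1 ≤ M`, the
slack `(a + b) M` pays both for `b M` in the denominator and for `a ≤ a M` in the numerator.
-/

theorem mul_le_one_sub_mul_mul_of_rpow_mul_le {q t v M : ℝ} (hq : 0 ≤ q) (hv₀ : 0 ≤ v)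
    (hv₁ : v ≤ 1) (hM : 0 ≤ M) (ht : q ^ (1 - v) * t ≤ M) :
    q * t ≤ (1 - v * (1 - q)) * M := by
  have hsplit : q ^ v * q ^ (1 - v) = q := by
    rw [← rpow_add' hq (by simp), add_sub_cancel, rpow_one]
  have hbernoulli : q ^ v ≤ 1 - v * (1 - q) := by
    have h := rpow_one_add_le_one_add_mul_self (s := q - 1) (by linarith) hv₀ hv₁
    rw [add_sub_cancel] at h
    linarith
  calc
    q * t = q ^ v * (q ^ (1 - v) * t) := by rw [← mul_assoc, hsplit]
    _ ≤ q ^ v * M := by gcongr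
    _ ≤ (1 - v * (1 - q)) * M := by gcongr

theorem mul_add_le_mul_one_sub_of_rpow_mul_le {q t a b v M : ℝ} (hq : 0 ≤ q) (ha : 0 ≤ a)
    (hv₀ : 0 ≤ v) (hv₁ : v ≤ 1) (hab : a + b ≤ v * (1 - q)) (hM : 1 ≤ M)
    (ht : q ^ (1 - v) * t ≤ M) :
    q * t + a ≤ M * (1 - b) := by
  have hM₀ : 0 ≤ M := zero_le_one.trans hM
  calc
    q * t + a ≤ (1 - v * (1 - q)) * M + a * M :=
      add_le_add (mul_le_one_sub_mul_mul_of_rpow_mul_le hq hv₀ hv₁ hM₀ ht)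
        (le_mul_of_one_le_right ha hM)
    _ ≤ (1 - (a + b)) * M + a * M := by gcongr
    _ = M * (1 - b) := by ring

/- For a perturbation `G` of the iterate, `φ₁` stands for a bound on `‖G‖` and `φ₂` for a bound on
the component of `G` in the target subspace, which may be much smaller. -/
theorem noisy_matrix_subspace_iteration_step_general {dr dr1 φ₁ φ₂ c s v : ℝ}
    (hdr1 : 0 ≤ dr1) (hlt : dr1 < dr) (hφ₂ : 0 ≤ φ₂) (hφ : φ₂ ≤ φ₁) (hc : 0 < c)
    (hv : v = (φ₁ + φ₂) / ((dr - dr1) * c)) (hv₁ : v ≤ 1) :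
    0 < dr * c - φ₂ ∧
    (dr1 * s + φ₁) / (dr * c - φ₂) ≤ max ((dr1 / dr) ^ (1 - v) * (s / c)) 1 := by
  have hdr : 0 < dr := hdr1.trans_lt hlt
  have hgap : 0 < dr - dr1 := sub_pos.2 hlt
  have hdrc : 0 < dr * c := mul_pos hdr hc
  have hφ₁ : 0 ≤ φ₁ := hφ₂.trans hφ
  have hv₀ : 0 ≤ v := by rw [hv]; positivity
  have hnoise : φ₁ + φ₂ ≤ (dr - dr1) * c := by
    rwa [hv, div_le_one (mul_pos hgap hc)] at hv₁
  have hden : 0 < dr * c - φ₂ := by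
    have : 0 ≤ dr1 * c := mul_nonneg hdr1 hc.le
    linarith
  refine ⟨hden, ?_⟩
  have hab : φ₁ / (dr * c) + φ₂ / (dr * c) = v * (1 - dr1 / dr) := by
    rw [hv]
    field_simp
  calc
    (dr1 * s + φ₁) / (dr * c - φ₂)
        = (dr1 / dr * (s / c) + φ₁ / (dr * c)) / (1 - φ₂ / (dr * c)) := by
      field_simp
    _ ≤ max ((dr1 / dr) ^ (1 - v) * (s / c)) 1 := by
      rw [div_le_iff₀ (sub_pos.2 ((div_lt_one hdrc).2 (sub_pos.1 hden)))]
      exact mul_add_le_mul_one_sub_of_rpow_mul_le (div_nonneg hdr1 hdr.le)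
        (div_nonneg hφ₁ hdrc.le) hv₀ hv₁ hab.le (le_max_right _ _) (le_max_left _ _)

/-- One step of matrix subspace iteration on a perturbed matrix: with
`u = φ/(gap·cos θ)` and `2u ≤ 1`, the new tangent is at most
`max((d_{r+1}/d_r)^{1−2u} tan θ, 1)`. -/
theorem noisy_matrix_subspace_iteration_step
    (dr dr1 φ θ gap u : ℝ)
    (hdr1 : 0 ≤ dr1) (hlt : dr1 < dr)
    (hgap : gap = dr - dr1)
    (hφ : 0 ≤ φ)
    (hθ0 : 0 ≤ θ) (hθ1 : θ < Real.pi / 2)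
    (hu : u = φ / (gap * Real.cos θ))
    (h2u : 2 * u ≤ 1) :
    0 < dr * Real.cos θ - φ ∧
    (dr1 * Real.sin θ + φ) / (dr * Real.cos θ - φ)
      ≤ max ((dr1 / dr) ^ (1 - 2 * u) * Real.tan θ) 1 := by
  have hcos : 0 < cos θ := cos_pos_of_mem_Ioo ⟨by linarith [pi_pos], hθ1⟩
  rw [tan_eq_sin_div_cos]
  exact noisy_matrix_subspace_iteration_step_general hdr1 hlt hφ le_rfl hcos
    (by rw [hu, hgap]; ring) h2u
end

section
/- Let λ_r > λ_{r+1} ≥ 0 be real numbers with gap := λ_r − λ_{r+1}, let σ ≥ 0, let ε' > 0, and let θ_B, θ_C ∈ [0, π/4]. Set r₁ := √2·σ / (ε'·gap), r₂ := 2σ / gap, and θ := 1 − 2r₁ − r₂, and assume θ > 0. Then λ_r · cos θ_B · cos θ_C − σ > 0 and (λ_{r+1} · sin θ_B · sin θ_C + σ) / (λ_r · cos θ_B · cos θ_C − σ) ≤ max( max( (λ_{r+1}/λ_r)^θ, ε' ) · tan θ_B · tan θ_C, ε' ), where (λ_{r+1}/λ_r)^θ denotes the real power of the nonnegative real λ_{r+1}/λ_r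 with exponent θ. -/
open Real

/-!
Dividing numerator and denominator by `cos θB * cos θC` turns the ratio into
`(b * t + τ) / (a - τ)`, where `a = lamr`, `b = lamr1`, `t = tan θB * tan θC` and
`τ = σ / (cos θB * cos θC)`. With the weighted mean `m = (1 - θ) * b + θ * a`, AM-GM gives
`b ≤ (b / a) ^ θ * m`, so the signal `b * t` is at most `(b / a) ^ θ * t` times `m`, while the
noise `τ` is `ε` times `ε⁻¹ * τ`. Hence the larger of the two factors bounds the ratio as soon as
`m + ε⁻¹ * τ ≤ a - τ`, that is, `(1 + ε⁻¹) * τ ≤ (1 - θ) * (a - b)`. On `[0, π / 4]` the product of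
cosines is at least `1 / 2`, so `τ ≤ 2 * σ`; the terms `2 * r₁` and `r₂` pay for `ε⁻¹ * τ` and `τ`.
-/

theorem le_div_rpow_mul_weighted_mean {a b θ : ℝ} (ha : 0 < a) (hb : 0 ≤ b)
    (hθ₀ : 0 ≤ θ) (hθ₁ : θ ≤ 1) :
    b ≤ (b / a) ^ θ * ((1 - θ) * b + θ * a) := by
  have hθ₁' : 0 ≤ 1 - θ := sub_nonneg.2 hθ₁
  calc b = b ^ θ * b ^ (1 - θ) := by
        rw [← rpow_add_of_nonneg hb hθ₀ hθ₁', add_sub_cancel, rpow_one]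
    _ = (b / a) ^ θ * (b ^ (1 - θ) * a ^ θ) := by
        rw [div_rpow hb ha.le]
        field_simp
    _ ≤ (b / a) ^ θ * ((1 - θ) * b + θ * a) := by
        gcongr
        exact geom_mean_le_arith_mean2_weighted hθ₁' hθ₀ hb ha.le (sub_add_cancel 1 θ)

section SignalNoise

variable {a b τ ε θ : ℝ}

theorem noise_lt_signal (ha : 0 < a) (hb : 0 ≤ b) (hε : 0 < ε) (hθ₀ : 0 ≤ θ) (hθ₁ : θ ≤ 1)
    (hτθ : (1 + ε⁻¹) * τ ≤ (1 - θ) * (a - b)) : τ < a := by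
  have hmean : 0 ≤ (1 - θ) * b + θ * a :=
    add_nonneg (mul_nonneg (sub_nonneg.2 hθ₁) hb) (mul_nonneg hθ₀ ha.le)
  have hεa : 0 < ε⁻¹ * a := by positivity
  have hmul : (1 + ε⁻¹) * τ < (1 + ε⁻¹) * a := by linarith
  exact lt_of_mul_lt_mul_left hmul (by positivity)

theorem signal_add_noise_div_le_max {t : ℝ} (ha : 0 < a) (hb : 0 ≤ b) (hτ : 0 ≤ τ) (hε : 0 < ε)
    (ht : 0 ≤ t) (hθ₀ : 0 ≤ θ) (hθ₁ : θ ≤ 1) (hτθ : (1 + ε⁻¹) * τ ≤ (1 - θ) * (a - b)) :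
    (b * t + τ) / (a - τ) ≤ max ((b / a) ^ θ * t) ε := by
  rw [div_le_iff₀ (sub_pos.2 (noise_lt_signal ha hb hε hθ₀ hθ₁ hτθ))]
  set M := max ((b / a) ^ θ * t) ε
  set m := (1 - θ) * b + θ * a with hm
  have hm₀ : 0 ≤ m := add_nonneg (mul_nonneg (sub_nonneg.2 hθ₁) hb) (mul_nonneg hθ₀ ha.le)
  have hsignal : b * t ≤ M * m :=
    calc b * t ≤ (b / a) ^ θ * m * t := by
          gcongr
          exact le_div_rpow_mul_weighted_mean ha hb hθ₀ hθ₁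
      _ = (b / a) ^ θ * t * m := by ring
      _ ≤ M * m := mul_le_mul_of_nonneg_right (le_max_left _ _) hm₀
  have hnoise : τ ≤ M * (ε⁻¹ * τ) :=
    calc τ = ε * (ε⁻¹ * τ) := (mul_inv_cancel_left₀ hε.ne' τ).symm
      _ ≤ M * (ε⁻¹ * τ) := by
          gcongr
          exact le_max_right _ _
  have hslack : m + ε⁻¹ * τ ≤ a - τ := by
    rw [hm]
    linarith
  have hM : 0 ≤ M := hε.le.trans (le_max_right _ _)
  calc b * t + τ ≤ M * m + M * (ε⁻¹ * τ) := add_le_add hsignal hnoise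
    _ = M * (m + ε⁻¹ * τ) := by ring
    _ ≤ M * (a - τ) := mul_le_mul_of_nonneg_left hslack hM

end SignalNoise

theorem sqrt_two_div_two_le_cos {x : ℝ} (hx : |x| ≤ π / 4) : √2 / 2 ≤ cos x := by
  rw [← cos_pi_div_four, ← cos_abs x]
  exact cos_le_cos_of_nonneg_of_le_pi (abs_nonneg x) (by linarith [pi_pos]) hx

theorem half_le_cos_mul_cos {x y : ℝ} (hx : |x| ≤ π / 4) (hy : |y| ≤ π / 4) :
    1 / 2 ≤ cos x * cos y :=
  calc (1 : ℝ) / 2 = √2 / 2 * (√2 / 2) := by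
        rw [div_mul_div_comm, mul_self_sqrt zero_le_two]
        norm_num
    _ ≤ cos x * cos y := by
        gcongr
        · exact (by positivity : 0 ≤ √2 / 2).trans (sqrt_two_div_two_le_cos hx)
        · exact sqrt_two_div_two_le_cos hx
        · exact sqrt_two_div_two_le_cos hy

theorem one_add_inv_mul_div_le {σ ε gap c : ℝ} (hσ : 0 ≤ σ) (hε : 0 < ε) (hgap : 0 < gap)
    (hc : 1 / 2 ≤ c) :
    (1 + ε⁻¹) * (σ / c) ≤ (2 * (√2 * σ / (ε * gap)) + 2 * σ / gap) * gap :=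
  have hσc : σ / c ≤ 2 * σ :=
    calc σ / c ≤ σ / (1 / 2) := by gcongr
      _ = 2 * σ := by ring
  calc (1 + ε⁻¹) * (σ / c) ≤ (1 + ε⁻¹) * (2 * σ) := by gcongr
    _ = 2 * (1 * σ) / ε + 2 * σ := by ring
    _ ≤ 2 * (√2 * σ) / ε + 2 * σ := by
        gcongr
        exact one_le_sqrt.2 one_le_two
    _ = (2 * (√2 * σ / (ε * gap)) + 2 * σ / gap) * gap := by field_simp

theorem noisy_alternating_subspace_iteration_step_general {lamr lamr1 σ ε θ θB θC : ℝ}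
    (hlamr1 : 0 ≤ lamr1) (hlt : lamr1 < lamr) (hσ : 0 ≤ σ) (hε : 0 < ε)
    (hcos : 0 < cos θB * cos θC) (htan : 0 ≤ tan θB * tan θC) (hθ₀ : 0 ≤ θ)
    (hσθ : (1 + ε⁻¹) * (σ / (cos θB * cos θC)) ≤ (1 - θ) * (lamr - lamr1)) :
    0 < lamr * cos θB * cos θC - σ ∧
    (lamr1 * sin θB * sin θC + σ) / (lamr * cos θB * cos θC - σ)
      ≤ max ((lamr1 / lamr) ^ θ * (tan θB * tan θC)) ε := by
  set c := cos θB * cos θC with hc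
  set τ := σ / c
  have hτ : 0 ≤ τ := div_nonneg hσ hcos.le
  have hlamr : 0 < lamr := hlamr1.trans_lt hlt
  have hθ₁ : θ ≤ 1 := sub_nonneg.1 <|
    nonneg_of_mul_nonneg_left (le_trans (by positivity) hσθ) (sub_pos.2 hlt)
  have hcτ : c * τ = σ := mul_div_cancel₀ σ hcos.ne'
  have hden : lamr * cos θB * cos θC - σ = c * (lamr - τ) := by
    rw [mul_sub, hcτ, hc]
    ring
  have hnum : lamr1 * sin θB * sin θC + σ = c * (lamr1 * (tan θB * tan θC) + τ) := by
    rw [mul_add, hcτ, hc, ← tan_mul_cos (left_ne_zero_of_mul hcos.ne'),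
      ← tan_mul_cos (right_ne_zero_of_mul hcos.ne')]
    ring
  rw [hden, hnum, mul_div_mul_left _ _ hcos.ne']
  exact ⟨mul_pos hcos (sub_pos.2 (noise_lt_signal hlamr hlamr1 hε hθ₀ hθ₁ hσθ)),
    signal_add_noise_div_le_max hlamr hlamr1 hτ hε htan hθ₀ hθ₁ hσθ⟩

/-- One step of alternating subspace iteration on a noisy tensor: with
`r₁ = √2 σ/(ε' gap)`, `r₂ = 2σ/gap`, `θ = 1 − 2r₁ − r₂ > 0`, the new tangent is at most
`max(max((λ_{r+1}/λ_r)^θ, ε') · tan θ_B · tan θ_C, ε')`. -/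
theorem noisy_alternating_subspace_iteration_step
    (lamr lamr1 σ ε' gap r₁ r₂ θ θB θC : ℝ)
    (hlamr1 : 0 ≤ lamr1) (hlt : lamr1 < lamr)
    (hgap : gap = lamr - lamr1)
    (hσ : 0 ≤ σ) (hε' : 0 < ε')
    (hθB0 : 0 ≤ θB) (hθB1 : θB ≤ Real.pi / 4)
    (hθC0 : 0 ≤ θC) (hθC1 : θC ≤ Real.pi / 4)
    (hr₁ : r₁ = Real.sqrt 2 * σ / (ε' * gap))
    (hr₂ : r₂ = 2 * σ / gap)
    (hθ : θ = 1 - 2 * r₁ - r₂)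
    (hθpos : 0 < θ) :
    0 < lamr * Real.cos θB * Real.cos θC - σ ∧
    (lamr1 * Real.sin θB * Real.sin θC + σ) / (lamr * Real.cos θB * Real.cos θC - σ)
      ≤ max (max ((lamr1 / lamr) ^ θ) ε' * Real.tan θB * Real.tan θC) ε' := by
  have hcos : 1 / 2 ≤ cos θB * cos θC :=
    half_le_cos_mul_cos ((abs_of_nonneg hθB0).trans_le hθB1) ((abs_of_nonneg hθC0).trans_le hθC1)
  have htan : 0 ≤ tan θB * tan θC :=
    mul_nonneg (tan_nonneg_of_nonneg_of_le_pi_div_two hθB0 (by linarith [pi_pos]))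
      (tan_nonneg_of_nonneg_of_le_pi_div_two hθC0 (by linarith [pi_pos]))
  have hσθ : (1 + ε'⁻¹) * (σ / (cos θB * cos θC)) ≤ (1 - θ) * (lamr - lamr1) := by
    rw [hθ, hr₁, hr₂, hgap, sub_sub, sub_sub_cancel]
    exact one_add_inv_mul_div_le hσ hε' (sub_pos.2 hlt) hcos
  rw [mul_assoc (max _ _)]
  exact (noisy_alternating_subspace_iteration_step_general hlamr1 hlt hσ hε'
    (one_half_pos.trans_le hcos) htan hθpos.le hσθ).imp_right fun h ↦
      h.trans (max_le_max_right _ (mul_le_mul_of_nonneg_right (le_max_left _ _) htan))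
end
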